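/- arXiv:2008.03505 — 4 statements merged into one kernel-verified Lean document; each statement's English description precedes it below -/
import Mathlib

section
/- Let p > 2 be a prime, let a > 1 and m ≥ 1 be integers, and set d = a²m² + 4ap. Suppose integers x, y satisfy x² − d·y² = ε·4p where ε ∈ {1, −1}, and define X = ((am² + 2p)·x − m·d·y)/(2p) and Y = (m·x − (am² + 2p)·y)/(2p). Then X² − d·Y² = ε·4p. -/
/-- Let `p > 2` be a prime, let `a > 1` and `m ≥ 1` be integers, and set
`d = a²m² + 4ap`. Suppose integers `x, y` satisfy `x² − d·y² = ε·4p` where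
`ε ∈ {1, −1}`, and define `X = ((am² + 2p)·x − m·d·y)/(2p)` and
`Y = (m·x − (am² + 2p)·y)/(2p)` (these are integers). Then
`X² − d·Y² = ε·4p`. -/
theorem stmt_3 (p a m d : ℤ) (hp : Prime p) (hp2 : 2 < p)
    (ha : 1 < a) (hm : 1 ≤ m) (hd : d = a ^ 2 * m ^ 2 + 4 * a * p)
    (ε : ℤ) (hε : ε = 1 ∨ ε = -1)
    (x y : ℤ) (hxy : x ^ 2 - d * y ^ 2 = ε * (4 * p))
    (X Y : ℤ)
    (hX : 2 * p * X = (a * m ^ 2 + 2 * p) * x - m * d * y)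
    (hY : 2 * p * Y = m * x - (a * m ^ 2 + 2 * p) * y) :
    X ^ 2 - d * Y ^ 2 = ε * (4 * p) := by
  have hp0 : (2 * p) ^ 2 ≠ 0 := by positivity
  apply mul_left_cancel₀ hp0
  have h : (2 * p) ^ 2 * (X ^ 2 - d * Y ^ 2) = (2 * p * X) ^ 2 - d * (2 * p * Y) ^ 2 := by ring
  rw [h, hX, hY, ← hxy, hd]
  ring
end

section
/- Let p > 2 be a prime, let a ≥ 1 and m ≥ 1 be integers, and set d = a²m² + 4ap. There are no integers x and y with y ≥ 1 satisfying both (am² + 4p)·y ≤ m·x and x² − d·y² = ±4p (that is, x² − d·y² equal to 4p or to −4p). -/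
/-- Let `p > 2` be a prime, let `a ≥ 1` and `m ≥ 1` be integers, and set
`d = a²m² + 4ap`. There are no integers `x` and `y` with `y ≥ 1` satisfying
both `(am² + 4p)·y ≤ m·x` and `x² − d·y² = ±4p`. -/
theorem stmt_4 (p a m d : ℤ) (hp : Prime p) (hp2 : 2 < p)
    (ha : 1 ≤ a) (hm : 1 ≤ m) (hd : d = a ^ 2 * m ^ 2 + 4 * a * p) :
    ¬ ∃ x y : ℤ, 1 ≤ y ∧ (a * m ^ 2 + 4 * p) * y ≤ m * x ∧
      (x ^ 2 - d * y ^ 2 = 4 * p ∨ x ^ 2 - d * y ^ 2 = -(4 * p)) := by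
  rintro ⟨x, y, hy, hxy, h⟩
  have hD : m ^ 2 < a * m ^ 2 + 4 * p := by nlinarith [sq_nonneg m]
  have hD0 : 0 < a * m ^ 2 + 4 * p := by nlinarith [sq_nonneg m]
  have hy2 : 1 ≤ y ^ 2 := by nlinarith
  have h1 : ((a * m ^ 2 + 4 * p) * y) ^ 2 ≤ (m * x) ^ 2 :=
    pow_le_pow_left₀ (by positivity) hxy 2
  have h2 : x ^ 2 ≤ d * y ^ 2 + 4 * p := by rcases h with h | h <;> linarith
  have h3 : m ^ 2 * x ^ 2 ≤ m ^ 2 * (d * y ^ 2 + 4 * p) :=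
    mul_le_mul_of_nonneg_left h2 (sq_nonneg m)
  have h4 : (4 * p) * ((a * m ^ 2 + 4 * p) * y ^ 2) ≤ (4 * p) * m ^ 2 := by
    subst hd
    linarith
  have h5 := le_of_mul_le_mul_left h4 (by linarith)
  nlinarith
end

section
/- Let p > 2 be a prime and let a > 1 and m ≥ 1 be integers such that d = a²m² + 4ap is squarefree and p divides m. Then h(d) > 1. -/
open NumberField
lemma sq_dep {G : Type*} [CommGroup G] (g h : G) (H : ∀ u : G, ∃ k e : ℤ, u = g ^ k * h ^ e)
  (u v w : G) : ∃ i j l : ℕ, i ≤ 1 ∧ j ≤ 1 ∧ l ≤ 1 ∧ i + j + l ≠ 0 ∧ ∃ x : G, u ^ i * v ^ j * w ^ l = x ^ 2 := by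
  obtain ⟨a, b, rfl⟩ := H u
  obtain ⟨c, d, rfl⟩ := H v
  obtain ⟨e, f, rfl⟩ := H w
  have key : ∃ i j l : ℕ, i ≤ 1 ∧ j ≤ 1 ∧ l ≤ 1 ∧ i + j + l ≠ 0 ∧
      (∃ r : ℤ, a * i + c * j + e * l = r * 2) ∧ ∃ r : ℤ, b * i + d * j + f * l = r * 2 := by
    have P : ∀ a b c d e f : ZMod 2, ∃ i j l : Fin 2, i.val + j.val + l.val ≠ 0 ∧
      a * i.val + c * j.val + e * l.val = 0 ∧ b * i.val + d * j.val + f * l.val = 0 := by decide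
    obtain ⟨i, j, l, h0, h1, h2⟩ := P a b c d e f
    refine ⟨i, j, l, by omega, by omega, by omega, h0, ?_, ?_⟩
    · have : ((a * i.val + c * j.val + e * l.val : ℤ) : ZMod 2) = 0 := by push_cast; exact h1
      rw [ZMod.intCast_zmod_eq_zero_iff_dvd] at this
      obtain ⟨r, hr⟩ := this
      exact ⟨r, by rw [hr]; push_cast; ring⟩
    · have : ((b * i.val + d * j.val + f * l.val : ℤ) : ZMod 2) = 0 := by push_cast; exact h2
      rw [ZMod.intCast_zmod_eq_zero_iff_dvd] at this
      obtain ⟨r, hr⟩ := this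
      exact ⟨r, by rw [hr]; push_cast; ring⟩
  obtain ⟨i, j, l, hi, hj, hl, h0, ⟨r, hr⟩, ⟨s, hs⟩⟩ := key
  refine ⟨i, j, l, hi, hj, hl, h0, g ^ r * h ^ s, ?_⟩
  have e1 : (g ^ r * h ^ s) ^ 2 = g ^ (r * 2) * h ^ (s * 2) := by
    rw [mul_pow, zpow_mul, zpow_mul, zpow_ofNat, zpow_ofNat]
  rw [e1, ← hr, ← hs]
  simp only [mul_pow, zpow_add, zpow_mul, zpow_natCast]
  simp only [mul_assoc, mul_left_comm, mul_comm]

lemma units_gen (K : Type) [Field K] [NumberField K] (hdeg : Module.finrank ℚ K = 2) :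
    ∃ g h : (𝓞 K)ˣ, ∀ u : (𝓞 K)ˣ, ∃ k e : ℤ, u = g ^ k * h ^ e := by
  have hr : Units.rank K ≤ 1 := by
    have h1 := InfinitePlace.card_add_two_mul_card_eq_rank K
    have h2 := InfinitePlace.card_eq_nrRealPlaces_add_nrComplexPlaces K
    unfold Units.rank
    omega
  obtain ⟨g, hg⟩ := IsCyclic.exists_generator (α := Units.torsion K)
  have hU := Units.exist_unique_eq_mul_prod K
  rcases Nat.lt_or_ge 0 (Units.rank K) with h0 | h0
  · refine ⟨g, Units.fundSystem K ⟨0, h0⟩, fun u => ?_⟩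
    obtain ⟨⟨z, e⟩, hu, -⟩ := hU u
    obtain ⟨k, hk⟩ := Subgroup.mem_zpowers_iff.1 (hg z)
    refine ⟨k, e ⟨0, h0⟩, ?_⟩
    rw [hu, Finset.prod_eq_single ⟨0, h0⟩]
    · simp [← hk]
    · intro b _ hb
      exact absurd (Fin.ext (by simp; omega)) hb
    · simp
  · refine ⟨g, 1, fun u => ?_⟩
    obtain ⟨⟨z, e⟩, hu, -⟩ := hU u
    obtain ⟨k, hk⟩ := Subgroup.mem_zpowers_iff.1 (hg z)
    refine ⟨k, 0, ?_⟩
    have : IsEmpty (Fin (Units.rank K)) := ⟨fun x => by have := x.2; omega⟩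
    rw [hu, Finset.prod_of_isEmpty]
    simp [← hk]

lemma int_of_rat_sq (s : ℤ) (hs : Squarefree s) (r : ℚ) (h : (s : ℚ) = r ^ 2) : s = 1 := by
  have : IsSquare (s : ℚ) := ⟨r, by rw [h, sq]⟩
  obtain ⟨x, hx⟩ := Rat.isSquare_intCast_iff.1 this
  have := hs x ⟨1, by rw [hx, mul_one]⟩
  rcases Int.isUnit_iff.1 this with h | h <;> simp [hx, h]

lemma sq_in_K (s t d : ℤ) (hst : s * t = d) (hd : 1 < d) (hsf : Squarefree d)
    (K : Type) [Field K] [NumberField K] (hdeg : Module.finrank ℚ K = 2)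
    (α : K) (hα : α ^ 2 = (d : K)) (x : K) (hx : x ^ 2 = (s : K)) : s = 1 ∨ t = 1 := by
  have hirr : ∀ q : ℚ, α ≠ (q : K) := by
    rintro q rfl
    have : (d : ℚ) = q ^ 2 := by exact_mod_cast hα.symm
    have := int_of_rat_sq d hsf q this
    omega
  have hli : LinearIndependent ℚ ![1, α] := by
    rw [LinearIndependent.pair_iff]
    intro u v h
    have hv : v = 0 := by
      by_contra hv
      apply hirr (-u / v)
      simp only [Rat.smul_def] at h
      have : (v : K) ≠ 0 := by exact_mod_cast hv
      push_cast
      field_simp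
      linear_combination h
    subst hv
    simpa [Rat.smul_def] using h
  have hspan := hli.span_eq_top_of_card_eq_finrank (by simp [hdeg])
  have hxm : x ∈ Submodule.span ℚ (Set.range ![1, α]) := by rw [hspan]; trivial
  simp only [Matrix.range_cons, Matrix.range_empty, Set.union_empty, Set.singleton_union] at hxm
  obtain ⟨u, v, huv⟩ := Submodule.mem_span_pair.1 hxm
  simp only [Rat.smul_def] at huv
  have e : ((s - u ^ 2 - v ^ 2 * d : ℚ) : K) = (2 * u * v : ℚ) * α := by
    push_cast
    rw [← hx, ← huv, ← hα]; ring
  have huv0 : 2 * u * v = 0 := by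
    by_contra hne
    apply hirr ((s - u ^ 2 - v ^ 2 * d) / (2 * u * v))
    rw [Rat.cast_div, e]
    have : ((2 * u * v : ℚ) : K) ≠ 0 := by exact_mod_cast hne
    field_simp
  rw [huv0] at e
  have e2 : (s - u ^ 2 - v ^ 2 * d : ℚ) = 0 := by
    rw [Rat.cast_zero, zero_mul] at e; exact_mod_cast e
  have hs0 : (s : ℚ) ≠ 0 := by rintro h; have : s = 0 := by exact_mod_cast h
                               subst this; omega
  rcases mul_eq_zero.1 huv0 with h | h
  · right
    have hu : u = 0 := by simpa using h
    subst hu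
    have hd' : (d : ℚ) = s * t := by exact_mod_cast hst.symm
    have h1 : (1 : ℚ) = v ^ 2 * t := by
      apply mul_left_cancel₀ hs0; rw [hd'] at e2; linear_combination e2
    have hv : v ≠ 0 := by rintro rfl; simp at h1
    refine int_of_rat_sq t (hsf.squarefree_of_dvd ⟨s, by rw [← hst]; ring⟩) v⁻¹ ?_
    field_simp
    linear_combination -h1
  · left
    subst h
    exact int_of_rat_sq s (hsf.squarefree_of_dvd ⟨t, hst.symm⟩) u (by linear_combination e2)

lemma sqrt_assoc (s t d : ℤ) (hst : s * t = d) (hsf : Squarefree d)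
    (R : Type) [CommRing R] [IsDomain R] [IsPrincipalIdealRing R]
    (α : R) (hα : α ^ 2 = (d : R)) : ∃ (β : R) (u : Rˣ), β ^ 2 * u = (s : R) := by
  classical
  have hc : IsCoprime s t := by
    rw [← hst, squarefree_mul_iff] at hsf
    exact isRelPrime_iff_isCoprime.1 hsf.1
  have hc' : IsCoprime (s : R) (t : R) := by simpa using hc.map (Int.castRingHom R)
  letI : GCDMonoid R := UniqueFactorizationMonoid.toGCDMonoid R
  obtain ⟨β, u, hu⟩ := exists_associated_pow_of_mul_eq_pow (a := (s : R)) (b := (t : R)) (c := α) (k := 2)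
    ((gcd_isUnit_iff_isRelPrime).2 hc'.isRelPrime) (by rw [hα, ← hst]; push_cast; rfl)
  exact ⟨β, u, hu⟩

/-- Let `p > 2` be a prime and let `a > 1` and `m ≥ 1` be integers such that
`d = a²m² + 4ap` is squarefree and `p` divides `m`. Then `h(d) > 1`, where
`h(d)` is the class number of the real quadratic field `ℚ(√d)`. -/
theorem stmt_7 (p a m d : ℤ) (hp : Prime p) (hp2 : 2 < p)
    (ha : 1 < a) (hm : 1 ≤ m) (hd : d = a ^ 2 * m ^ 2 + 4 * a * p)
    (hsf : Squarefree d) (hpm : p ∣ m)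
    (K : Type) [Field K] [NumberField K] (hdeg : Module.finrank ℚ K = 2)
    (α : K) (hα : α ^ 2 = (d : K)) :
    1 < NumberField.classNumber K := by
  by_contra hcl
  have hpos : 0 < NumberField.classNumber K := Fintype.card_pos
  have h1 : NumberField.classNumber K = 1 := by omega
  have hpid := classNumber_eq_one_iff.1 h1
  obtain ⟨c, rfl⟩ := hpm
  obtain ⟨n, hn⟩ : ∃ n, n = a * p * c ^ 2 + 4 := ⟨_, rfl⟩
  have hn1 : 1 < n := by
    have : 0 ≤ a * p * c ^ 2 := by positivity
    omega
  have hdn : a * p * n = d := by rw [hd, hn]; ring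
  have hap : 1 < a * p := by nlinarith
  have hpn : 1 < p * n := by nlinarith
  have han : 1 < a * n := by nlinarith
  have hd1 : 1 < d := by rw [← hdn]; nlinarith
  have hint : IsIntegral ℤ α := by
    refine IsIntegral.of_pow (n := 2) (by norm_num) ?_
    rw [hα]; exact isIntegral_algebraMap (R := ℤ) (x := d)
  obtain ⟨A, hA⟩ : ∃ A : 𝓞 K, (A : K) = α := ⟨⟨α, hint⟩, rfl⟩
  have hA2 : A ^ 2 = (d : 𝓞 K) := by
    apply RingOfIntegers.coe_injective
    rw [map_pow, map_intCast, ← hα, ← hA]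
  obtain ⟨β, u, hu⟩ := sqrt_assoc a (p * n) d (by rw [← hdn]; ring) hsf (𝓞 K) A hA2
  obtain ⟨γ, v, hv⟩ := sqrt_assoc p (a * n) d (by rw [← hdn]; ring) hsf (𝓞 K) A hA2
  obtain ⟨g, h, H⟩ := units_gen K hdeg
  obtain ⟨i, j, l, hi, hj, hl, h0, x, hx⟩ := sq_dep g h H (-1) u v
  have hx' : (-1 : 𝓞 K) ^ i * (u : 𝓞 K) ^ j * (v : 𝓞 K) ^ l = (x : 𝓞 K) ^ 2 := by
    have := congrArg (Units.val) hx
    simpa using this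
  have hfin : ((x : 𝓞 K) * β ^ j * γ ^ l) ^ 2 = (((-1) ^ i * a ^ j * p ^ l : ℤ) : 𝓞 K) := by
    push_cast
    rw [← hu, ← hv, mul_pow, mul_pow, ← hx']; ring
  have hK : (((x : 𝓞 K) * β ^ j * γ ^ l : 𝓞 K) : K) ^ 2 = (((-1) ^ i * a ^ j * p ^ l : ℤ) : K) := by
    have := congrArg (fun y : 𝓞 K => (y : K)) hfin
    simpa using this
  have hfinal := sq_in_K ((-1) ^ i * a ^ j * p ^ l) ((-1) ^ i * a ^ (1 - j) * p ^ (1 - l) * n) d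
    (by interval_cases i <;> interval_cases j <;> interval_cases l <;> rw [← hdn] <;> ring)
    hd1 hsf K hdeg α hα _ hK
  have : 1 < a * p * n := by rw [hdn]; exact hd1
  interval_cases i <;> interval_cases j <;> interval_cases l <;> simp at hfinal h0 <;> omega
end

section
/- Let p > 2 be a prime and let a > 1 and m ≥ 1 be integers such that d = a²m² + 4ap is squarefree and gcd(m, p) = 1. Then p splits completely in the real quadratic field ℚ(√d); that is, the ideal generated by p in the ring of integers of ℚ(√d) factors as 𝔞·𝔞′ where 𝔞 and 𝔞′ are distinct prime ideals, each of norm p. -/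
open Polynomial in
/-- If `p` divides neither `2n` nor is `d` a square, then `w + n` is not divisible by `p`. -/
theorem aux_not_dvd {R : Type} [CommRing R] [IsDomain R] [CharZero R]
    (hIntegral : ∀ x : R, IsIntegral ℤ x) (p n c d : ℤ) (hp : p ≠ 0)
    (hpn : ¬ p ∣ 2 * n) (hd : d = n ^ 2 + c * p) (hsq : ∀ k : ℤ, k ^ 2 ≠ d)
    (w : R) (hw : w ^ 2 = (d : R)) : ¬ (p : R) ∣ w + n := by
  rintro ⟨x, hx⟩
  have hp' : (p : R) ≠ 0 := by exact_mod_cast hp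
  have hroot : (p : R) * x ^ 2 - 2 * n * x - c = 0 := by
    apply mul_left_cancel₀ hp'
    have : w = p * x - n := by rw [← hx]; ring
    rw [this, hd] at hw
    push_cast at hw
    linear_combination hw
  have hI := hIntegral x
  set P : ℤ[X] := C p * X ^ 2 + C (-(2 * n)) * X + C (-c) with hP
  have hdvd : minpoly ℤ x ∣ P := by
    apply minpoly.isIntegrallyClosed_dvd hI
    simp only [hP, map_add, map_mul (aeval x), aeval_C, aeval_X, map_pow]
    simp only [eq_intCast]
    push_cast
    linear_combination hroot
  have hm := minpoly.monic hI
  have hdeg : P.natDegree = 2 := natDegree_quadratic hp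
  have hP0 : P ≠ 0 := by intro h; rw [h] at hdeg; simp at hdeg
  obtain ⟨g, hg⟩ := hdvd
  have hg0 : g ≠ 0 := by rintro rfl; simp [hg] at hP0
  have hdd : P.natDegree = (minpoly ℤ x).natDegree + g.natDegree := by
    rw [hg, hm.natDegree_mul' hg0]
  have hpos : 0 < (minpoly ℤ x).natDegree := minpoly.natDegree_pos hI
  have hc1 : P.coeff 1 = -(2 * n) := by rw [hP]; simp only [coeff_add, coeff_C_mul, coeff_X_pow, coeff_X, coeff_C]; norm_num
  have hl : P.leadingCoeff = p := leadingCoeff_quadratic hp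
  by_cases h1 : (minpoly ℤ x).natDegree = 1
  · have h2 := minpoly.aeval ℤ x
    rw [hm.eq_X_add_C h1] at h2
    simp at h2
    have hxe : x = ((-(minpoly ℤ x).coeff 0 : ℤ) : R) := by
      push_cast; linear_combination h2
    generalize (-(minpoly ℤ x).coeff 0 : ℤ) = k at hxe
    apply hsq (p * k - n)
    have : ((p * k - n : ℤ) : R) ^ 2 = (d : R) := by
      rw [← hw]
      push_cast
      rw [← hxe, ← hx]; ring
    exact_mod_cast this
  · have : g.natDegree = 0 := by omega
    rw [natDegree_eq_zero] at this
    obtain ⟨e, rfl⟩ := this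
    have he : e = p := by
      rw [← hl, hg, leadingCoeff_mul, hm.leadingCoeff, leadingCoeff_C, one_mul]
    apply hpn
    rw [hg, he, coeff_mul_C] at hc1
    exact ⟨-(minpoly ℤ x).coeff 1, by linear_combination hc1⟩


/-- Let `p > 2` be a prime and let `a > 1` and `m ≥ 1` be integers such that
`d = a²m² + 4ap` is squarefree and `gcd(m, p) = 1`. Then `p` splits completely
in the real quadratic field `ℚ(√d)`: the ideal generated by `p` in the ring of
integers factors as `𝔞·𝔞′` where `𝔞` and `𝔞′` are distinct prime ideals, each
of absolute norm `p`. -/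
theorem stmt_8 (p a m d : ℤ) (hp : Prime p) (hp2 : 2 < p)
    (ha : 1 < a) (hm : 1 ≤ m) (hd : d = a ^ 2 * m ^ 2 + 4 * a * p)
    (hsf : Squarefree d) (hcop : IsCoprime m p)
    (K : Type) [Field K] [NumberField K] (hdeg : Module.finrank ℚ K = 2)
    (α : K) (hα : α ^ 2 = (d : K)) :
    ∃ A B : Ideal (NumberField.RingOfIntegers K),
      A ≠ B ∧ A.IsPrime ∧ B.IsPrime ∧
      Ideal.span {(p : NumberField.RingOfIntegers K)} = A * B ∧
      (Ideal.absNorm A : ℤ) = p ∧ (Ideal.absNorm B : ℤ) = p := by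

  have hpa : ¬ p ∣ a := by
    rintro ⟨k, hk⟩
    have h : p * p ∣ d := ⟨k ^ 2 * m ^ 2 + 4 * k, by rw [hd, hk]; ring⟩
    exact hp.not_isUnit (hsf p h)
  have hpm : ¬ p ∣ m := fun h => hp.not_isUnit (hcop.symm.isUnit_of_dvd h)
  have hpn : ¬ p ∣ 2 * (a * m) := by
    intro h
    rcases hp.dvd_or_dvd h with h | h
    · have := Int.le_of_dvd (by norm_num) h
      omega
    · rcases hp.dvd_or_dvd h with h | h
      · exact hpa h
      · exact hpm h
  have hsq : ∀ k : ℤ, k ^ 2 ≠ d := by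
    intro k hk
    have hu := hsf k ⟨1, by rw [← hk]; ring⟩
    have h1 : k ^ 2 = 1 := by
      rcases Int.isUnit_iff.1 hu with h | h <;> simp [h]
    have : 0 < a ^ 2 * m ^ 2 := by positivity
    have : 0 < a * p := by positivity
    linarith
  have hai : IsIntegral ℤ α := by
    apply IsIntegral.of_pow (n := 2) (by norm_num)
    rw [hα]
    exact isIntegral_algebraMap (R := ℤ) (x := d)
  obtain ⟨w, hwα⟩ : ∃ w : NumberField.RingOfIntegers K, (w : K) = α := ⟨⟨α, hai⟩, rfl⟩
  have hw : w ^ 2 = (d : NumberField.RingOfIntegers K) := by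
    apply NumberField.RingOfIntegers.ext
    simpa [hwα] using hα
  have hIntegral : ∀ x : NumberField.RingOfIntegers K, IsIntegral ℤ x :=
    fun x => NumberField.RingOfIntegers.isIntegral x
  have hn1 := aux_not_dvd hIntegral p (a * m) (4 * a) d hp.ne_zero hpn (by rw [hd]; ring) hsq w hw
  have hn2 := aux_not_dvd hIntegral p (-(a * m)) (4 * a) d hp.ne_zero
    (by rwa [mul_neg, dvd_neg]) (by rw [hd]; ring) hsq w hw
  generalize hn : a * m = n at hpn hn1 hn2
  have hdn : d = n ^ 2 + 4 * a * p := by rw [hd, ← hn]; ring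
  obtain ⟨u, v, huv⟩ : IsCoprime p (2 * n) := (Prime.coprime_iff_not_dvd hp).2 hpn
  have huv' : (u : NumberField.RingOfIntegers K) * p + v * (2 * n) = 1 := by exact_mod_cast huv
  have hw' : w ^ 2 = (n : NumberField.RingOfIntegers K) ^ 2 + 4 * a * p := by
    rw [hw, hdn]; push_cast; ring
  set A : Ideal (NumberField.RingOfIntegers K) := Ideal.span {(p : NumberField.RingOfIntegers K), w + n} with hA
  set B : Ideal (NumberField.RingOfIntegers K) := Ideal.span {(p : NumberField.RingOfIntegers K), w + (-n : ℤ)} with hB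
  have hAB : Ideal.span {(p : NumberField.RingOfIntegers K)} = A * B := by
    rw [hA, hB, Ideal.span_pair_mul_span_pair]
    apply le_antisymm
    · rw [Ideal.span_singleton_le_iff_mem]
      have e : (p : NumberField.RingOfIntegers K) = u * (p * p) + v * ((w + n) * p) + (-v) * (p * (w + (-n : ℤ))) := by
        push_cast
        linear_combination -(p : NumberField.RingOfIntegers K) * huv'
      suffices hs : ∀ y : NumberField.RingOfIntegers K, y = u * (p * p) + v * ((w + n) * p) +
          (-v) * (p * (w + (-n : ℤ))) → y ∈ Ideal.span {(p * p : NumberField.RingOfIntegers K),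
            p * (w + (-n : ℤ)), (w + n) * p, (w + n) * (w + (-n : ℤ))} from hs _ e
      rintro y rfl
      refine add_mem (add_mem ?_ ?_) ?_ <;>
      · refine Ideal.mul_mem_left _ _ (Ideal.subset_span ?_)
        simp
    · rw [Ideal.span_le]
      rintro y hy
      simp only [Set.mem_insert_iff, Set.mem_singleton_iff] at hy
      rw [SetLike.mem_coe, Ideal.mem_span_singleton]
      rcases hy with rfl | rfl | rfl | rfl
      · exact dvd_mul_right _ _
      · exact dvd_mul_right _ _
      · exact dvd_mul_left _ _
      · exact ⟨4 * a, by push_cast; linear_combination hw'⟩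
  have hA1 : A ≠ ⊤ := by
    intro h
    rw [h, Ideal.top_mul] at hAB
    apply hn2
    rw [← Ideal.mem_span_singleton, hAB]
    exact Ideal.subset_span (by simp)
  have hB1 : B ≠ ⊤ := by
    intro h
    rw [h, Ideal.mul_top] at hAB
    apply hn1
    rw [← Ideal.mem_span_singleton, hAB]
    exact Ideal.subset_span (by simp)
  have hne : A ≠ B := by
    intro h
    apply hA1
    rw [Ideal.eq_top_iff_one, ← huv']
    have h1 : (p : NumberField.RingOfIntegers K) ∈ A := Ideal.subset_span (by simp)
    have h2 : w + n ∈ A := Ideal.subset_span (by simp)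
    have h3 : w + (-n : ℤ) ∈ A := by rw [h]; exact Ideal.subset_span (by simp)
    have h4 : (2 * n : NumberField.RingOfIntegers K) ∈ A := by
      have := sub_mem h2 h3
      convert this using 1
      push_cast; ring
    exact add_mem (Ideal.mul_mem_left _ _ h1) (Ideal.mul_mem_left _ _ h4)
  have hpN : p.natAbs.Prime := Int.prime_iff_natAbs_prime.1 hp
  have hnorm : Ideal.absNorm A * Ideal.absNorm B = p.natAbs ^ 2 := by
    rw [← map_mul, ← hAB, Ideal.absNorm_span_singleton]
    have : (p : NumberField.RingOfIntegers K) = algebraMap ℤ (NumberField.RingOfIntegers K) p := by simp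
    rw [this, Algebra.norm_algebraMap, NumberField.RingOfIntegers.rank, hdeg, Int.natAbs_pow]
  obtain ⟨eA, eB⟩ := (Nat.Prime.mul_eq_prime_sq_iff hpN
    (fun h => hA1 (Ideal.absNorm_eq_one_iff.1 h))
    (fun h => hB1 (Ideal.absNorm_eq_one_iff.1 h))).1 hnorm
  refine ⟨A, B, hne, ?_, ?_, hAB, ?_, ?_⟩
  · exact Ideal.isPrime_of_irreducible_absNorm (by rw [eA]; exact hpN)
  · exact Ideal.isPrime_of_irreducible_absNorm (by rw [eB]; exact hpN)
  · rw [eA]; omega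
  · rw [eB]; omega
end
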